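/- Let n ≥ 2, k ≥ 1, and let I^{(1)} ⊇ m^k ⊇ I^{(2)} be homogeneous m-primary ideals of R contained in m. Then the forgetful ℂ-linear map T^{=−1}(I^{(1)}, m^k, I^{(2)}) → T^{=−1}(I^{(1)}, I^{(2)}), (φ_1, φ_k, φ_2) ↦ (φ_1, φ_2), is surjective and admits a ℂ-linear section, and its kernel is ℂ-linearly isomorphic to Hom_ℂ(R_k/(I^{(2)} ∩ R_k), I^{(1)} ∩ R_{k−1}); in particular the kernel has dimension dim_ℂ(R_k/(I^{(2)} ∩ R_k)) · dim_ℂ(I^{(1)} ∩ R_{k−1}). -/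

import Mathlib

open MvPolynomial

noncomputable section
set_option synthInstance.maxHeartbeats 1000000
set_option maxHeartbeats 1000000

/-- `R n = ℂ[x_1, …, x_n]`. -/
abbrev R (n : ℕ) : Type := MvPolynomial (Fin n) ℂ

/-- `m = (x_1, …, x_n)`, the ideal generated by the variables. -/
def mId (n : ℕ) : Ideal (R n) := Ideal.span (Set.range MvPolynomial.X)

/-- `R_d`, the ℂ-subspace of homogeneous polynomials of degree `d`. -/
def Rdeg (n d : ℕ) : Submodule ℂ (R n) := homogeneousSubmodule (Fin n) ℂ d

open Classical in
/-- The canonical projection `R/p → R/q` (for `p ≤ q`); defined as `0` if `p ≰ q`. -/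
def proj {n : ℕ} (p q : Ideal (R n)) : (R n ⧸ p) →ₗ[R n] (R n ⧸ q) :=
  if h : p ≤ q then Submodule.mapQ p q LinearMap.id (fun _ hx => h hx) else 0

/-- Candidate tangent tuples for a pair of ideals. -/
abbrev TanCar2 (n : ℕ) (I1 I2 : Ideal (R n)) : Type :=
  (↥I1 →ₗ[R n] (R n ⧸ I1)) × (↥I2 →ₗ[R n] (R n ⧸ I2))

/-- Candidate tangent tuples for a triple of ideals. -/
abbrev TanCar3 (n : ℕ) (I1 K I2 : Ideal (R n)) : Type :=
  (↥I1 →ₗ[R n] (R n ⧸ I1)) × (↥K →ₗ[R n] (R n ⧸ K)) × (↥I2 →ₗ[R n] (R n ⧸ I2))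

/-- The tangent space `T(I^{(1)}, I^{(2)})` of a pair. -/
def pairT {n : ℕ} (I1 I2 : Ideal (R n)) : Submodule ℂ (TanCar2 n I1 I2) where
  carrier := { φ | ∀ (f : R n) (hf1 : f ∈ I1) (hf2 : f ∈ I2),
      φ.1 ⟨f, hf1⟩ = proj I2 I1 (φ.2 ⟨f, hf2⟩) }
  add_mem' := by
    intro a b ha hb f hf1 hf2
    simp only [Prod.fst_add, Prod.snd_add, LinearMap.add_apply, map_add,
      ha f hf1 hf2, hb f hf1 hf2]
  zero_mem' := by intro f hf1 hf2; simp
  smul_mem' := by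
    intro c a ha f hf1 hf2
    simp only [Prod.smul_fst, Prod.smul_snd, LinearMap.smul_apply,
      LinearMap.map_smul_of_tower, ha f hf1 hf2]

/-- The tangent space `T(I^{(1)}, K, I^{(2)})` of a triple. -/
def tripleT {n : ℕ} (I1 K I2 : Ideal (R n)) : Submodule ℂ (TanCar3 n I1 K I2) where
  carrier := { φ |
      (∀ (f : R n) (hf1 : f ∈ I1) (hfK : f ∈ K),
        φ.1 ⟨f, hf1⟩ = proj K I1 (φ.2.1 ⟨f, hfK⟩)) ∧
      (∀ (f : R n) (hfK : f ∈ K) (hf2 : f ∈ I2),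
        φ.2.1 ⟨f, hfK⟩ = proj I2 K (φ.2.2 ⟨f, hf2⟩)) }
  add_mem' := by
    intro a b ha hb
    refine ⟨fun f hf1 hfK => ?_, fun f hfK hf2 => ?_⟩
    · simp only [Prod.fst_add, Prod.snd_add, LinearMap.add_apply, map_add,
        ha.1 f hf1 hfK, hb.1 f hf1 hfK]
    · simp only [Prod.fst_add, Prod.snd_add, LinearMap.add_apply, map_add,
        ha.2 f hfK hf2, hb.2 f hfK hf2]
  zero_mem' := by
    refine ⟨fun f hf1 hfK => ?_, fun f hfK hf2 => ?_⟩ <;> simp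
  smul_mem' := by
    intro c a ha
    refine ⟨fun f hf1 hfK => ?_, fun f hfK hf2 => ?_⟩
    · simp only [Prod.smul_fst, Prod.smul_snd, LinearMap.smul_apply,
        LinearMap.map_smul_of_tower, ha.1 f hf1 hfK]
    · simp only [Prod.smul_fst, Prod.smul_snd, LinearMap.smul_apply,
        LinearMap.map_smul_of_tower, ha.2 f hfK hf2]

open Classical in
/-- The image of `R_{e+d}` in `R/I` (interpreted as `0` when `e + d < 0`). -/
def gradedImage {n : ℕ} (I : Ideal (R n)) (e : ℕ) (d : ℤ) : Submodule ℂ (R n ⧸ I) :=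
  if h : 0 ≤ (e : ℤ) + d then
    Submodule.map (Ideal.Quotient.mkₐ ℂ I).toLinearMap (Rdeg n ((e : ℤ) + d).toNat)
  else ⊥

/-- The property that a tangent vector `φ ∈ Hom_R(I, R/I)` is homogeneous of degree `d`:
for every `e ≥ 0` and every homogeneous `f ∈ I ∩ R_e`, `φ(f)` lies in the image of
`R_{e+d}` in `R/I`. -/
def gradedHom {n : ℕ} (I : Ideal (R n)) (d : ℤ) (φ : ↥I →ₗ[R n] (R n ⧸ I)) : Prop :=
  ∀ (e : ℕ) (f : R n) (hf : f ∈ I), f ∈ Rdeg n e → φ ⟨f, hf⟩ ∈ gradedImage I e d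

/-- The degree-`d` part `T^{=d}(I^{(1)}, I^{(2)})` of the tangent space of a pair of
homogeneous ideals. -/
def pairTgr {n : ℕ} (I1 I2 : Ideal (R n)) (d : ℤ) : Submodule ℂ (TanCar2 n I1 I2) :=
  pairT I1 I2 ⊓
    { carrier := { φ | gradedHom I1 d φ.1 ∧ gradedHom I2 d φ.2 }
      add_mem' := by
        intro a b ha hb
        refine ⟨fun e f hf hfe => ?_, fun e f hf hfe => ?_⟩
        · exact Submodule.add_mem _ (ha.1 e f hf hfe) (hb.1 e f hf hfe)
        · exact Submodule.add_mem _ (ha.2 e f hf hfe) (hb.2 e f hf hfe)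
      zero_mem' := by
        refine ⟨fun e f hf hfe => ?_, fun e f hf hfe => ?_⟩ <;>
          exact Submodule.zero_mem _
      smul_mem' := by
        intro c a ha
        refine ⟨fun e f hf hfe => ?_, fun e f hf hfe => ?_⟩
        · exact Submodule.smul_mem _ c (ha.1 e f hf hfe)
        · exact Submodule.smul_mem _ c (ha.2 e f hf hfe) }

/-- The degree-`d` part `T^{=d}(I^{(1)}, K, I^{(2)})` of the tangent space of a triple of
homogeneous ideals. -/
def tripleTgr {n : ℕ} (I1 K I2 : Ideal (R n)) (d : ℤ) : Submodule ℂ (TanCar3 n I1 K I2) :=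
  tripleT I1 K I2 ⊓
    { carrier := { φ | gradedHom I1 d φ.1 ∧ gradedHom K d φ.2.1 ∧ gradedHom I2 d φ.2.2 }
      add_mem' := by
        intro a b ha hb
        refine ⟨fun e f hf hfe => ?_, fun e f hf hfe => ?_, fun e f hf hfe => ?_⟩
        · exact Submodule.add_mem _ (ha.1 e f hf hfe) (hb.1 e f hf hfe)
        · exact Submodule.add_mem _ (ha.2.1 e f hf hfe) (hb.2.1 e f hf hfe)
        · exact Submodule.add_mem _ (ha.2.2 e f hf hfe) (hb.2.2 e f hf hfe)
      zero_mem' := by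
        refine ⟨fun e f hf hfe => ?_, fun e f hf hfe => ?_, fun e f hf hfe => ?_⟩ <;>
          exact Submodule.zero_mem _
      smul_mem' := by
        intro c a ha
        refine ⟨fun e f hf hfe => ?_, fun e f hf hfe => ?_, fun e f hf hfe => ?_⟩
        · exact Submodule.smul_mem _ c (ha.1 e f hf hfe)
        · exact Submodule.smul_mem _ c (ha.2.1 e f hf hfe)
        · exact Submodule.smul_mem _ c (ha.2.2 e f hf hfe) }

theorem mem_mpow_iff {n : ℕ} (k : ℕ) (p : R n) :
    p ∈ mId n ^ k ↔ ∀ x, Finsupp.degree x < k → p.coeff x = 0 :=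
  MvPolynomial.mem_pow_idealOfVars_iff' k p

theorem coeff_Rdeg {n d : ℕ} {p : R n} (hp : p ∈ Rdeg n d) (x : Fin n →₀ ℕ)
    (hx : Finsupp.degree x ≠ d) : p.coeff x = 0 := by
  have h : p.IsHomogeneous d := hp
  exact h.coeff_eq_zero hx

theorem Rdeg_mem_mpow {n d k : ℕ} (h : k ≤ d) {p : R n} (hp : p ∈ Rdeg n d) :
    p ∈ mId n ^ k := by
  rw [mem_mpow_iff]
  intro x hx
  exact coeff_Rdeg hp x (by omega)

theorem Rdeg_mpow_eq_zero {n d k : ℕ} (h : d < k) {p : R n} (hp : p ∈ Rdeg n d)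
    (hp' : p ∈ mId n ^ k) : p = 0 := by
  ext x
  rw [coeff_zero]
  by_cases hx : Finsupp.degree x = d
  · exact (mem_mpow_iff k p).1 hp' x (by omega)
  · exact coeff_Rdeg hp x hx

theorem comp_mpow_eq_zero {n d k : ℕ} (h : d < k) {p : R n} (hp : p ∈ mId n ^ k) :
    homogeneousComponent d p = 0 := by
  ext x
  rw [coeff_homogeneousComponent, coeff_zero]
  split_ifs with hx
  · exact (mem_mpow_iff k p).1 hp x (by omega)
  · rfl

theorem comp_mem_mpow {n k : ℕ} (p : R n) (hp : p ∈ mId n ^ k) (d : ℕ) :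
    homogeneousComponent d p ∈ mId n ^ k := by
  rw [mem_mpow_iff] at hp ⊢
  intro x hx
  rw [coeff_homogeneousComponent, hp x hx, ite_self]

/-- The projection to the degree `k` part. -/
def compK (n k : ℕ) : R n →ₗ[ℂ] Rdeg n k :=
  (homogeneousComponent k).codRestrict (Rdeg n k) (fun p => homogeneousComponent_mem k p)

theorem compK_coe (n k : ℕ) (p : R n) : (compK n k p : R n) = homogeneousComponent k p := rfl

theorem compK_self {n k : ℕ} (p : Rdeg n k) : compK n k p = p := by
  apply Subtype.ext
  rw [compK_coe]
  exact homogeneousComponent_eq_self p.2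

/-- The map from the degree `d` part to the quotient. -/
def qm {n : ℕ} (I : Ideal (R n)) (d : ℕ) : Rdeg n d →ₗ[ℂ] (R n ⧸ I) :=
  (Ideal.Quotient.mkₐ ℂ I).toLinearMap ∘ₗ (Rdeg n d).subtype

theorem qm_apply {n : ℕ} (I : Ideal (R n)) (d : ℕ) (p : Rdeg n d) :
    qm I d p = Ideal.Quotient.mk I (p : R n) := rfl

theorem proj_mk {n : ℕ} {p q : Ideal (R n)} (h : p ≤ q) (x : R n) :
    proj p q (Ideal.Quotient.mk p x) = Ideal.Quotient.mk q x := by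
  unfold proj
  rw [dif_pos h]
  rfl

theorem proj_self {n : ℕ} (p : Ideal (R n)) (x : R n ⧸ p) : proj p p x = x := by
  obtain ⟨x, rfl⟩ := Ideal.Quotient.mk_surjective x
  exact proj_mk le_rfl x

theorem mem_gradedImage {n : ℕ} (I : Ideal (R n)) (e : ℕ) (he : 1 ≤ e) (y : R n ⧸ I) :
    y ∈ gradedImage I e (-1) ↔ ∃ p : Rdeg n (e - 1), qm I (e - 1) p = y := by
  have h0 : (0 : ℤ) ≤ (e : ℤ) + (-1) := by omega
  have h1 : ((e : ℤ) + (-1)).toNat = e - 1 := by omega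
  unfold gradedImage
  rw [dif_pos h0, h1]
  constructor
  · rintro ⟨p, hp, rfl⟩
    exact ⟨⟨p, hp⟩, rfl⟩
  · rintro ⟨p, rfl⟩
    exact ⟨p, p.2, rfl⟩

theorem C_mul_smul {n k : ℕ} (r : R n) (f : R n) (hf : f ∈ mId n ^ k) :
    compK n k (r * f) = (coeff 0 r) • compK n k f := by
  apply Subtype.ext
  rw [Submodule.coe_smul, compK_coe, compK_coe]
  have h1 : r - C (coeff 0 r) ∈ mId n := by
    rw [← pow_one (mId n), mem_mpow_iff]
    intro x hx
    have : x = 0 := by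
      rw [← Finsupp.degree_eq_zero_iff]; omega
    subst this
    simp
  have h2 : (r - C (coeff 0 r)) * f ∈ mId n ^ (k + 1) := by
    rw [pow_succ']
    exact Ideal.mul_mem_mul h1 hf
  have h3 := comp_mpow_eq_zero (Nat.lt_succ_self k) h2
  rw [sub_mul, map_sub, sub_eq_zero, homogeneousComponent_C_mul] at h3
  rw [h3, smul_eq_C_mul]

theorem mk_mul_low {n k : ℕ} (hk : 1 ≤ k) (r : R n) (p : Rdeg n (k - 1)) :
    Ideal.Quotient.mk (mId n ^ k) (r * (p : R n)) =
      Ideal.Quotient.mk (mId n ^ k) (((coeff 0 r) • p : Rdeg n (k - 1)) : R n) := by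
  rw [Ideal.Quotient.eq, Submodule.coe_smul, smul_eq_C_mul, ← sub_mul]
  have h1 : r - C (coeff 0 r) ∈ mId n := by
    rw [← pow_one (mId n), mem_mpow_iff]
    intro x hx
    have : x = 0 := by
      rw [← Finsupp.degree_eq_zero_iff]; omega
    subst this
    simp
  obtain ⟨j, rfl⟩ : ∃ j, k = j + 1 := ⟨k - 1, by omega⟩
  rw [pow_succ']
  exact Ideal.mul_mem_mul h1 (Rdeg_mem_mpow (by omega) p.2)

/-- The homomorphism `m^k → R/m^k` of degree `-1` attached to a linear map `R_k → R_{k-1}`. -/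
def Phi {n k : ℕ} (hk : 1 ≤ k) (ψ : Rdeg n k →ₗ[ℂ] Rdeg n (k - 1)) :
    ↥(mId n ^ k) →ₗ[R n] (R n ⧸ (mId n ^ k)) where
  toFun f := qm (mId n ^ k) (k - 1) (ψ (compK n k (f : R n)))
  map_add' f g := by
    rw [Submodule.coe_add, map_add, map_add, map_add]
  map_smul' r f := by
    rw [Submodule.coe_smul, smul_eq_mul, C_mul_smul r _ f.2, map_smul, RingHom.id_apply, qm_apply,
      ← mk_mul_low hk]
    rfl

theorem Phi_apply {n k : ℕ} (hk : 1 ≤ k) (ψ : Rdeg n k →ₗ[ℂ] Rdeg n (k - 1))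
    (f : R n) (hf : f ∈ mId n ^ k) :
    Phi hk ψ ⟨f, hf⟩ = qm (mId n ^ k) (k - 1) (ψ (compK n k f)) := rfl

theorem Phi_graded {n k : ℕ} (hk : 1 ≤ k) (ψ : Rdeg n k →ₗ[ℂ] Rdeg n (k - 1)) :
    gradedHom (mId n ^ k) (-1) (Phi hk ψ) := by
  intro e f hf hfe
  rw [Phi_apply]
  by_cases he : e = k
  · subst he
    rw [mem_gradedImage _ _ hk]
    exact ⟨_, rfl⟩
  · have : compK n k f = 0 := by
      apply Subtype.ext
      rw [compK_coe, homogeneousComponent_of_mem hfe, if_neg (Ne.symm he)]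
      rfl
    rw [this, map_zero, map_zero]
    exact Submodule.zero_mem _

/-- A homogeneous map of degree `-1` is determined modulo `J ⊇ m^k` by the degree `k` part. -/
theorem graded_det {n k : ℕ} (I J : Ideal (R n)) (hIJ : I ≤ J) (hJ : mId n ^ k ≤ J)
    (hhom : ∀ f ∈ I, ∀ e : ℕ, homogeneousComponent e f ∈ I)
    (φ : ↥I →ₗ[R n] (R n ⧸ I)) (hφ : gradedHom I (-1) φ)
    (f : R n) (hf : f ∈ I) (hfk : f ∈ mId n ^ k) :
    proj I J (φ ⟨f, hf⟩) = proj I J (φ ⟨homogeneousComponent k f, hhom f hf k⟩) := by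
  have h1 : (⟨f, hf⟩ : I) = ∑ e ∈ Finset.range (f.totalDegree + 1),
      ⟨homogeneousComponent e f, hhom f hf e⟩ := by
    apply Subtype.ext
    rw [AddSubmonoidClass.coe_finsetSum]
    exact (sum_homogeneousComponent f).symm
  rw [h1, map_sum, map_sum]
  apply Finset.sum_eq_single k
  · intro e _ hek
    rcases lt_or_gt_of_ne hek with h | h
    · have : (⟨homogeneousComponent e f, hhom f hf e⟩ : I) = 0 :=
        Subtype.ext (comp_mpow_eq_zero h hfk)
      rw [this, map_zero, map_zero]
    · obtain ⟨p, hp⟩ := (mem_gradedImage I e (by omega) _).1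
        (hφ e _ (hhom f hf e) (homogeneousComponent_mem e f))
      rw [← hp, qm_apply, proj_mk hIJ, Ideal.Quotient.eq_zero_iff_mem]
      exact hJ (Rdeg_mem_mpow (by omega) p.2)
  · intro hk
    have : (⟨homogeneousComponent k f, hhom f hf k⟩ : I) = 0 := by
      apply Subtype.ext
      apply homogeneousComponent_eq_zero
      simpa using hk
    rw [this, map_zero, map_zero]

theorem exists_lift {U V Q : Type*} [AddCommGroup U] [AddCommMonoid V] [AddCommGroup Q]
    [Module ℂ U] [Module ℂ V] [Module ℂ Q] (q : U →ₗ[ℂ] Q) (b : V →ₗ[ℂ] Q)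
    (h : ∀ v, ∃ u, q u = b v) : ∃ c : V →ₗ[ℂ] U, ∀ v, q (c v) = b v := by
  have hb : ∀ v, b v ∈ LinearMap.range q := h
  let : AddCommGroup V := Module.addCommMonoidToAddCommGroup ℂ
  obtain ⟨c, hc⟩ := Module.projective_lifting_property q.rangeRestrict
    (b.codRestrict (LinearMap.range q) hb) q.surjective_rangeRestrict
  refine ⟨c, fun v => ?_⟩
  have := LinearMap.congr_fun hc v
  exact congrArg Subtype.val this

theorem exists_lift_ext {U V Q : Type*} [AddCommGroup U] [AddCommGroup V] [AddCommGroup Q]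
    [Module ℂ U] [Module ℂ V] [Module ℂ Q] (q : U →ₗ[ℂ] Q) (b : V →ₗ[ℂ] Q)
    (h : ∀ v, ∃ u, q u = b v) (W : Submodule ℂ V) (a : W →ₗ[ℂ] U)
    (ha : ∀ w : W, q (a w) = b w) :
    ∃ c : V →ₗ[ℂ] U, (∀ v, q (c v) = b v) ∧ ∀ w : W, c w = a w := by
  obtain ⟨c, hc⟩ := exists_lift q b h
  have hd : ∀ w : W, (a - c ∘ₗ W.subtype) w ∈ LinearMap.ker q := by
    intro w
    rw [LinearMap.mem_ker, LinearMap.sub_apply, map_sub, ha, LinearMap.comp_apply, hc]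
    exact sub_self _
  obtain ⟨g, hg⟩ := LinearMap.exists_extend ((a - c ∘ₗ W.subtype).codRestrict _ hd)
  refine ⟨c + (LinearMap.ker q).subtype ∘ₗ g, fun v => ?_, fun w => ?_⟩
  · have : q (g v) = 0 := (g v).2
    rw [LinearMap.add_apply, map_add, hc, LinearMap.comp_apply, Submodule.subtype_apply, this,
      add_zero]
  · have h1 := congrArg Subtype.val (LinearMap.congr_fun hg w)
    have h2 : ((g (w : V) : LinearMap.ker q) : U) = a w - c w := h1
    rw [LinearMap.add_apply, LinearMap.comp_apply, Submodule.subtype_apply, h2]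
    abel

/-- Restriction of a homomorphism to a space of homogeneous elements. -/
def resV {n : ℕ} {V : Type*} [AddCommMonoid V] [Module ℂ V] (I : Ideal (R n))
    (j : V →ₗ[ℂ] R n) (hj : ∀ v, j v ∈ I) (φ : ↥I →ₗ[R n] (R n ⧸ I)) : V →ₗ[ℂ] (R n ⧸ I) where
  toFun v := φ ⟨j v, hj v⟩
  map_add' v w := by
    rw [← map_add]; congr 1; apply Subtype.ext; exact map_add j v w
  map_smul' c v := by
    rw [RingHom.id_apply, ← LinearMap.map_smul_of_tower]
    congr 1; apply Subtype.ext; exact map_smul j c v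

theorem lift_exists {n k : ℕ} (hk : 1 ≤ k) (I1 I2 : Ideal (R n))
    (hI1K : mId n ^ k ≤ I1) (hKI2 : I2 ≤ mId n ^ k)
    (hhom1 : ∀ f ∈ I1, ∀ e : ℕ, homogeneousComponent e f ∈ I1)
    (hhom2 : ∀ f ∈ I2, ∀ e : ℕ, homogeneousComponent e f ∈ I2)
    (φ : TanCar2 n I1 I2) (hφ : φ ∈ pairTgr I1 I2 (-1)) :
    ∃ ψ : Rdeg n k →ₗ[ℂ] Rdeg n (k - 1),
      ((φ.1, Phi hk ψ, φ.2) : TanCar3 n I1 (mId n ^ k) I2) ∈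
        tripleTgr I1 (mId n ^ k) I2 (-1) := by
  obtain ⟨hT, hg1, hg2⟩ := hφ
  have hT' : ∀ (f : R n) (hf1 : f ∈ I1) (hf2 : f ∈ I2),
      φ.1 ⟨f, hf1⟩ = proj I2 I1 (φ.2 ⟨f, hf2⟩) := hT
  have hVI : ∀ v : Rdeg n k, (Rdeg n k).subtype v ∈ I1 :=
    fun v => hI1K (Rdeg_mem_mpow le_rfl v.2)
  let W : Submodule ℂ (Rdeg n k) :=
    Submodule.comap (Rdeg n k).subtype (I2.restrictScalars ℂ)
  let j : W →ₗ[ℂ] R n := (Rdeg n k).subtype ∘ₗ W.subtype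
  have hWI : ∀ w : W, j w ∈ I2 := fun w => w.2
  let b2 : W →ₗ[ℂ] (R n ⧸ I2) := resV I2 j hWI φ.2
  obtain ⟨a, ha⟩ := exists_lift (qm I2 (k - 1)) b2
    (fun w => by
      have h := (mem_gradedImage I2 k hk _).1 (hg2 k _ (hWI w) w.1.2)
      exact h)
  have ha' : ∀ w : W, qm I2 (k - 1) (a w) = φ.2 ⟨((w : Rdeg n k) : R n), hWI w⟩ := ha
  obtain ⟨ψ, h1, h2⟩ := exists_lift_ext (qm I1 (k - 1))
    (resV I1 (Rdeg n k).subtype hVI φ.1)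
    (fun v => (mem_gradedImage I1 k hk _).1 (hg1 k _ (hVI v) v.2)) W a (by
      intro w
      have h := hT' ((w : Rdeg n k) : R n) (hVI w) (hWI w)
      rw [← ha' w, qm_apply, proj_mk (hKI2.trans hI1K)] at h
      exact h.symm)
  have h1' : ∀ v : Rdeg n k, qm I1 (k - 1) (ψ v) = φ.1 ⟨(v : R n), hVI v⟩ := h1
  refine ⟨ψ, ⟨⟨?_, ?_⟩, hg1, Phi_graded hk ψ, hg2⟩⟩
  · intro f hf1 hfK
    change φ.1 ⟨f, hf1⟩ = proj _ _ (Phi hk ψ ⟨f, hfK⟩)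
    have h3 := graded_det I1 I1 le_rfl hI1K hhom1 φ.1 hg1 f hf1 hfK
    rw [proj_self, proj_self] at h3
    rw [h3, Phi_apply, qm_apply, proj_mk hI1K, ← qm_apply, h1']
    rfl
  · intro f hfK hf2
    change Phi hk ψ ⟨f, hfK⟩ = proj _ _ (φ.2 ⟨f, hf2⟩)
    rw [graded_det I2 (mId n ^ k) hKI2 le_rfl hhom2 φ.2 hg2 f hf2 hfK, Phi_apply]
    have hw : compK n k f ∈ W := hhom2 f hf2 k
    have h4 := ha' ⟨compK n k f, hw⟩
    have h5 : φ.2 ⟨homogeneousComponent k f, hhom2 f hf2 k⟩ = qm I2 (k - 1) (a ⟨compK n k f, hw⟩) :=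
      h4.symm
    rw [h5, ← h2 ⟨compK n k f, hw⟩, qm_apply, qm_apply, proj_mk hKI2]

/-- The forgetful map. -/
def forg {n k : ℕ} (I1 I2 : Ideal (R n)) (hI1K : mId n ^ k ≤ I1) (hKI2 : I2 ≤ mId n ^ k) :
    ↥(tripleTgr I1 (mId n ^ k) I2 (-1)) →ₗ[ℂ] ↥(pairTgr I1 I2 (-1)) where
  toFun φ := ⟨(φ.1.1, φ.1.2.2), by
    obtain ⟨φ, ⟨hA, hB⟩, h1, h2, h3⟩ := φ
    refine ⟨?_, h1, h3⟩
    intro f hf1 hf2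
    change φ.1 ⟨f, hf1⟩ = proj _ _ (φ.2.2 ⟨f, hf2⟩)
    rw [hA f hf1 (hKI2 hf2), hB f (hKI2 hf2) hf2]
    obtain ⟨y, hy⟩ := Ideal.Quotient.mk_surjective (φ.2.2 ⟨f, hf2⟩)
    rw [← hy, proj_mk hKI2, proj_mk hI1K, proj_mk (hKI2.trans hI1K)]⟩
  map_add' _ _ := rfl
  map_smul' _ _ := rfl

/-- The linear map from homs to the triple tangent space. -/
def kerMap {n k : ℕ} (hk : 1 ≤ k) (I1 I2 : Ideal (R n))
    (hI1K : mId n ^ k ≤ I1) (hKI2 : I2 ≤ mId n ^ k)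
    (hhom2 : ∀ f ∈ I2, ∀ e : ℕ, homogeneousComponent e f ∈ I2) :
    ((↥(Rdeg n k) ⧸ Submodule.comap (Rdeg n k).subtype (I2.restrictScalars ℂ)) →ₗ[ℂ]
          ↥(I1.restrictScalars ℂ ⊓ Rdeg n (k - 1))) →ₗ[ℂ]
      ↥(LinearMap.ker (forg I1 I2 hI1K hKI2)) where
  toFun g := ⟨⟨(0, Phi hk (Submodule.inclusion inf_le_right ∘ₗ g ∘ₗ Submodule.mkQ _), 0), by
    refine ⟨⟨?_, ?_⟩, fun _ _ _ _ => Submodule.zero_mem _, Phi_graded hk _,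
      fun _ _ _ _ => Submodule.zero_mem _⟩
    · intro f hf1 hfK
      change 0 = proj _ _ (Phi hk _ ⟨f, hfK⟩)
      rw [Phi_apply, qm_apply, proj_mk hI1K, eq_comm, Ideal.Quotient.eq_zero_iff_mem]
      exact (g (Submodule.mkQ _ (compK n k f))).2.1
    · intro f hfK hf2
      change Phi hk _ ⟨f, hfK⟩ = proj _ _ 0
      rw [Phi_apply, map_zero]
      have : Submodule.mkQ (Submodule.comap (Rdeg n k).subtype (I2.restrictScalars ℂ))
          (compK n k f) = 0 := by
        rw [Submodule.mkQ_apply, Submodule.Quotient.mk_eq_zero]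
        exact hhom2 f hf2 k
      rw [LinearMap.comp_apply, LinearMap.comp_apply, this, map_zero, map_zero, map_zero]⟩, rfl⟩
  map_add' g h := by
    apply Subtype.ext
    apply Subtype.ext
    refine Prod.ext (add_zero _).symm (Prod.ext ?_ (add_zero _).symm)
    rfl
  map_smul' c g := by
    apply Subtype.ext
    apply Subtype.ext
    refine Prod.ext (smul_zero _).symm (Prod.ext ?_ (smul_zero _).symm)
    rfl

theorem kerMap_apply {n k : ℕ} (hk : 1 ≤ k) (I1 I2 : Ideal (R n))
    (hI1K : mId n ^ k ≤ I1) (hKI2 : I2 ≤ mId n ^ k)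
    (hhom2 : ∀ f ∈ I2, ∀ e : ℕ, homogeneousComponent e f ∈ I2)
    (g : (↥(Rdeg n k) ⧸ Submodule.comap (Rdeg n k).subtype (I2.restrictScalars ℂ)) →ₗ[ℂ]
          ↥(I1.restrictScalars ℂ ⊓ Rdeg n (k - 1))) :
    ((kerMap hk I1 I2 hI1K hKI2 hhom2 g).1.1 : TanCar3 n I1 (mId n ^ k) I2) =
      (0, Phi hk (Submodule.inclusion inf_le_right ∘ₗ g ∘ₗ Submodule.mkQ _), 0) := rfl

theorem qm_mpow_inj {n k : ℕ} (hk : 1 ≤ k) (p : Rdeg n (k - 1))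
    (h : qm (mId n ^ k) (k - 1) p = 0) : p = 0 := by
  rw [qm_apply, Ideal.Quotient.eq_zero_iff_mem] at h
  exact Subtype.ext (Rdeg_mpow_eq_zero (by omega) p.2 h)

theorem kerMap_bij {n k : ℕ} (hk : 1 ≤ k) (I1 I2 : Ideal (R n))
    (hI1K : mId n ^ k ≤ I1) (hKI2 : I2 ≤ mId n ^ k)
    (hhom2 : ∀ f ∈ I2, ∀ e : ℕ, homogeneousComponent e f ∈ I2) :
    Function.Bijective (kerMap hk I1 I2 hI1K hKI2 hhom2) := by
  constructor
  · rw [injective_iff_map_eq_zero]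
    intro g hg
    have h1 : Phi hk (Submodule.inclusion inf_le_right ∘ₗ g ∘ₗ Submodule.mkQ _) = 0 :=
      congrArg (fun t => (t.1.1 : TanCar3 n I1 (mId n ^ k) I2).2.1) hg
    apply LinearMap.ext
    intro v
    obtain ⟨v, rfl⟩ := Submodule.mkQ_surjective _ v
    have h2 := LinearMap.congr_fun h1 ⟨v, Rdeg_mem_mpow le_rfl v.2⟩
    rw [Phi_apply, compK_self] at h2
    have h3 := qm_mpow_inj hk _ h2
    have h4 := congrArg (fun t : Rdeg n (k - 1) => (t : R n)) h3
    apply Subtype.ext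
    exact h4
  · rintro ⟨⟨⟨φ1, φ, φ2⟩, ⟨hA, hB⟩, hg1, hg, hg2⟩, hker⟩
    have hker' := congrArg Subtype.val (LinearMap.mem_ker.1 hker)
    obtain rfl : φ1 = 0 := congrArg Prod.fst hker'
    obtain rfl : φ2 = 0 := congrArg Prod.snd hker'
    have hA' : ∀ (f : R n) (hfK : f ∈ mId n ^ k), proj _ I1 (φ ⟨f, hfK⟩) = 0 :=
      fun f hfK => (hA f (hI1K hfK) hfK).symm
    have hB' : ∀ (f : R n) (hfK : f ∈ mId n ^ k) (hf2 : f ∈ I2), φ ⟨f, hfK⟩ = 0 :=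
      fun f hfK hf2 => (hB f hfK hf2).trans (map_zero _)
    have hVI : ∀ v : Rdeg n k, (Rdeg n k).subtype v ∈ mId n ^ k :=
      fun v => Rdeg_mem_mpow le_rfl v.2
    obtain ⟨ψ, hψ⟩ := exists_lift (qm (mId n ^ k) (k - 1))
      (resV (mId n ^ k) (Rdeg n k).subtype hVI φ)
      (fun v => (mem_gradedImage _ k hk _).1 (hg k _ (hVI v) v.2))
    have hψ' : ∀ v : Rdeg n k, qm (mId n ^ k) (k - 1) (ψ v) = φ ⟨(v : R n), hVI v⟩ := hψ
    have hI : ∀ v, (ψ v : R n) ∈ I1 := by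
      intro v
      have := hA' v (hVI v)
      rwa [← hψ', qm_apply, proj_mk hI1K, Ideal.Quotient.eq_zero_iff_mem] at this
    let ψ' : Rdeg n k →ₗ[ℂ] ↥(I1.restrictScalars ℂ ⊓ Rdeg n (k - 1)) :=
      ((Rdeg n (k - 1)).subtype ∘ₗ ψ).codRestrict _ (fun v => ⟨hI v, (ψ v).2⟩)
    refine ⟨Submodule.liftQ _ ψ' ?_, ?_⟩
    · intro v hv
      have h0 : ψ v = 0 := qm_mpow_inj hk _ ((hψ' v).trans (hB' v _ hv))
      rw [LinearMap.mem_ker]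
      have h4 := congrArg (fun t : Rdeg n (k - 1) => (t : R n)) h0
      apply Subtype.ext
      exact h4
    · apply Subtype.ext
      apply Subtype.ext
      rw [kerMap_apply]
      refine Prod.ext rfl (Prod.ext ?_ rfl)
      apply LinearMap.ext
      rintro ⟨f, hf⟩
      change qm (mId n ^ k) (k - 1) (ψ (compK n k f)) = φ ⟨f, hf⟩
      have h3 := graded_det (mId n ^ k) (mId n ^ k) le_rfl le_rfl comp_mem_mpow φ hg f hf hf
      rw [proj_self, proj_self] at h3
      rw [h3, hψ']
      rfl

theorem exists_right_inv {V W : Type*} [AddCommMonoid V] [AddCommMonoid W] [Module ℂ V] [Module ℂ W]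
    (f : V →ₗ[ℂ] W) (hf : Function.Surjective f) : ∃ s : W →ₗ[ℂ] V, f ∘ₗ s = LinearMap.id := by
  let : AddCommGroup V := Module.addCommMonoidToAddCommGroup ℂ
  let : AddCommGroup W := Module.addCommMonoidToAddCommGroup ℂ
  exact LinearMap.exists_rightInverse_of_surjective _ (LinearMap.range_eq_top.2 hf)

/-- Let `n ≥ 2`, `k ≥ 1`, and let `I^{(1)} ⊇ m^k ⊇ I^{(2)}` be homogeneous
`m`-primary ideals contained in `m`.  Then the forgetful ℂ-linear map
`T^{=−1}(I^{(1)}, m^k, I^{(2)}) → T^{=−1}(I^{(1)}, I^{(2)})`, `(φ_1, φ_k, φ_2) ↦ (φ_1, φ_2)`,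
is surjective and admits a ℂ-linear section, and its kernel is ℂ-linearly isomorphic to
`Hom_ℂ(R_k/(I^{(2)} ∩ R_k), I^{(1)} ∩ R_{k−1})`; in particular the kernel has dimension
`dim_ℂ (R_k/(I^{(2)} ∩ R_k)) · dim_ℂ (I^{(1)} ∩ R_{k−1})`. -/
theorem forgetful_map_on_degree_minus_one_tangents (n k : ℕ) (hn : 2 ≤ n) (hk : 1 ≤ k)
    (I1 I2 : Ideal (R n))
    (hI1K : mId n ^ k ≤ I1) (hKI2 : I2 ≤ mId n ^ k)
    (hhom1 : ∀ f ∈ I1, ∀ e : ℕ, homogeneousComponent e f ∈ I1)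
    (hhom2 : ∀ f ∈ I2, ∀ e : ℕ, homogeneousComponent e f ∈ I2)
    (hprim1 : ∃ N : ℕ, 1 ≤ N ∧ mId n ^ N ≤ I1)
    (hprim2 : ∃ N : ℕ, 1 ≤ N ∧ mId n ^ N ≤ I2)
    (hm1 : I1 ≤ mId n) (hm2 : I2 ≤ mId n) :
    ∃ F : ↥(tripleTgr I1 (mId n ^ k) I2 (-1)) →ₗ[ℂ] ↥(pairTgr I1 I2 (-1)),
      (∀ φ : ↥(tripleTgr I1 (mId n ^ k) I2 (-1)),
        (F φ : TanCar2 n I1 I2) = ((φ : TanCar3 n I1 (mId n ^ k) I2).1,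
          (φ : TanCar3 n I1 (mId n ^ k) I2).2.2)) ∧
      Function.Surjective F ∧
      (∃ s : ↥(pairTgr I1 I2 (-1)) →ₗ[ℂ] ↥(tripleTgr I1 (mId n ^ k) I2 (-1)),
        F ∘ₗ s = LinearMap.id) ∧
      Nonempty (↥(LinearMap.ker F) ≃ₗ[ℂ]
        ((↥(Rdeg n k) ⧸ Submodule.comap (Rdeg n k).subtype (I2.restrictScalars ℂ)) →ₗ[ℂ]
          ↥(I1.restrictScalars ℂ ⊓ Rdeg n (k - 1)))) ∧
      Module.finrank ℂ ↥(LinearMap.ker F) =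
        Module.finrank ℂ
            (↥(Rdeg n k) ⧸ Submodule.comap (Rdeg n k).subtype (I2.restrictScalars ℂ)) *
          Module.finrank ℂ ↥(I1.restrictScalars ℂ ⊓ Rdeg n (k - 1)) := by
  have hsurj : Function.Surjective (forg I1 I2 hI1K hKI2) := by
    rintro ⟨φ, hφ⟩
    obtain ⟨ψ, hψ⟩ := lift_exists hk I1 I2 hI1K hKI2 hhom1 hhom2 φ hφ
    exact ⟨⟨_, hψ⟩, rfl⟩
  let E := LinearEquiv.ofBijective _ (kerMap_bij hk I1 I2 hI1K hKI2 hhom2)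
  refine ⟨forg I1 I2 hI1K hKI2, fun _ => rfl, hsurj, ?_, ⟨E.symm⟩, ?_⟩
  · exact exists_right_inv _ hsurj
  · have hfin : ∀ d, Module.Finite ℂ (Rdeg n d) := fun d =>
      Module.Finite.iff_fg.2 (homogeneousSubmodule_fg (Fin n) ℂ d)
    have := hfin k
    have := hfin (k - 1)
    have : Module.Finite ℂ ↥(I1.restrictScalars ℂ ⊓ Rdeg n (k - 1)) :=
      Submodule.finiteDimensional_of_le inf_le_right
    rw [← E.finrank_eq, Module.finrank_linearMap]

end
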